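/- Let X₁,…,Xₙ be mutually independent random variables with finitely many values, let Aⁿ=(A₁,…,Aₙ) be a deterministic function of Xⁿ=(X₁,…,Xₙ), let Yⁿ=(Y₁,…,Yₙ) be finite-valued random variables satisfying H(Yⁿ|(Aⁿ,Xⁿ)) = ∑ᵢ H(Yᵢ|(Aᵢ,Xᵢ)), let T be any finite-valued random variable, and let X̂ⁿ=(X̂₁,…,X̂ₙ) be a deterministic function of (T,Yⁿ). Then H(T) ≥ ∑_{i=1}^{n} [ I(Xᵢ;X̂ᵢ) − I((Xᵢ,Aᵢ);Yᵢ) ]. -/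

import Mathlib

open scoped BigOperators

noncomputable section

/-- Probability mass of the event `f = a` under the weight function `q` on a finite space. -/
def pmass {Ω α : Type*} [Fintype Ω] [DecidableEq α] (q : Ω → ℝ) (f : Ω → α) (a : α) : ℝ :=
  ∑ ω, if f ω = a then q ω else 0

/-- Shannon entropy (in bits) of the value of `f` under `q`. -/
def ent {Ω α : Type*} [Fintype Ω] [Fintype α] [DecidableEq α] (q : Ω → ℝ) (f : Ω → α) : ℝ :=
  -∑ a, pmass q f a * Real.logb 2 (pmass q f a)

/-- Conditional Shannon entropy `H(f ∣ g)` (in bits). -/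
def condEnt {Ω α β : Type*} [Fintype Ω] [Fintype α] [DecidableEq α] [Fintype β] [DecidableEq β]
    (q : Ω → ℝ) (f : Ω → α) (g : Ω → β) : ℝ :=
  ent q (fun ω => (f ω, g ω)) - ent q g

/-- Mutual information `I(f ; g)` (in bits). -/
def mutInf {Ω α β : Type*} [Fintype Ω] [Fintype α] [DecidableEq α] [Fintype β] [DecidableEq β]
    (q : Ω → ℝ) (f : Ω → α) (g : Ω → β) : ℝ :=
  ent q f + ent q g - ent q (fun ω => (f ω, g ω))

/-- Conditional mutual information `I(f ; g ∣ h)` (in bits). -/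
def condMutInf {Ω α β γ : Type*} [Fintype Ω] [Fintype α] [DecidableEq α] [Fintype β]
    [DecidableEq β] [Fintype γ] [DecidableEq γ]
    (q : Ω → ℝ) (f : Ω → α) (g : Ω → β) (h : Ω → γ) : ℝ :=
  condEnt q f h - condEnt q f (fun ω => (g ω, h ω))

/-- `q` is a probability mass function on `Ω`. -/
def IsPMF {Ω : Type*} [Fintype Ω] (q : Ω → ℝ) : Prop :=
  (∀ ω, 0 ≤ q ω) ∧ ∑ ω, q ω = 1

theorem sum_comp_pmass {Ω α : Type*} [Fintype Ω] [Fintype α] [DecidableEq α]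
    (q : Ω → ℝ) (f : Ω → α) (F : α → ℝ) :
    ∑ a, pmass q f a * F a = ∑ ω, q ω * F (f ω) := by
  unfold pmass
  simp_rw [Finset.sum_mul]
  rw [Finset.sum_comm]
  simp [ite_mul]

theorem ent_eq_sum {Ω α : Type*} [Fintype Ω] [Fintype α] [DecidableEq α]
    (q : Ω → ℝ) (f : Ω → α) :
    ent q f = -∑ ω, q ω * Real.logb 2 (pmass q f (f ω)) := by
  unfold ent
  rw [sum_comp_pmass q f (fun a => Real.logb 2 (pmass q f a))]

theorem pmass_nonneg {Ω α : Type*} [Fintype Ω] [DecidableEq α]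
    {q : Ω → ℝ} (hq : ∀ ω, 0 ≤ q ω) (f : Ω → α) (a : α) : 0 ≤ pmass q f a := by
  unfold pmass
  refine Finset.sum_nonneg fun ω _ => ?_
  split_ifs
  · exact hq ω
  · exact le_rfl

theorem le_pmass {Ω α : Type*} [Fintype Ω] [DecidableEq α]
    {q : Ω → ℝ} (hq : ∀ ω, 0 ≤ q ω) (f : Ω → α) (ω : Ω) : q ω ≤ pmass q f (f ω) := by
  unfold pmass
  have h := Finset.single_le_sum (f := fun ω' => if f ω' = f ω then q ω' else 0)
    (s := Finset.univ) (fun ω' _ => by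
      split_ifs
      · exact hq ω'
      · exact le_rfl) (Finset.mem_univ ω)
  simpa using h

theorem ent_mono {Ω α β : Type*} [Fintype Ω] [Fintype α] [DecidableEq α]
    [Fintype β] [DecidableEq β] {q : Ω → ℝ} (hq : ∀ ω, 0 ≤ q ω) (f : Ω → α) (g : Ω → β)
    (h : ∀ ω ω', g ω = g ω' → f ω = f ω') : ent q f ≤ ent q g := by
  rw [ent_eq_sum, ent_eq_sum, neg_le_neg_iff]
  refine Finset.sum_le_sum fun ω _ => ?_
  rcases (hq ω).eq_or_lt with h0 | h0
  · simp [← h0]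
  · refine mul_le_mul_of_nonneg_left ?_ (hq ω)
    have h1 : 0 < pmass q g (g ω) := h0.trans_le (le_pmass hq g ω)
    refine Real.logb_le_logb_of_le (by norm_num) h1 ?_
    unfold pmass
    refine Finset.sum_le_sum fun ω' _ => ?_
    by_cases hg : g ω' = g ω
    · simp [hg, h _ _ hg]
    · rw [if_neg hg]
      split_ifs
      · exact hq ω'
      · exact le_rfl

theorem ent_congr {Ω α β : Type*} [Fintype Ω] [Fintype α] [DecidableEq α]
    [Fintype β] [DecidableEq β] {q : Ω → ℝ} (hq : ∀ ω, 0 ≤ q ω) (f : Ω → α) (g : Ω → β)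
    (h : ∀ ω ω', g ω = g ω' ↔ f ω = f ω') : ent q f = ent q g :=
  le_antisymm (ent_mono hq f g fun ω ω' => (h ω ω').1) (ent_mono hq g f fun ω ω' => (h ω ω').2)

theorem pmass_marg {Ω α γ : Type*} [Fintype Ω] [Fintype α] [DecidableEq α] [DecidableEq γ]
    (q : Ω → ℝ) (f : Ω → α) (h : Ω → γ) (c : γ) :
    ∑ a, pmass q (fun ω => (f ω, h ω)) (a, c) = pmass q h c := by
  unfold pmass
  rw [Finset.sum_comm]
  refine Finset.sum_congr rfl fun ω _ => ?_
  by_cases hc : h ω = c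
  · simp [hc]
  · simp [hc]

theorem pmass_total {Ω γ : Type*} [Fintype Ω] [Fintype γ] [DecidableEq γ]
    (q : Ω → ℝ) (h : Ω → γ) : ∑ c, pmass q h c = ∑ ω, q ω := by
  simpa using sum_comp_pmass q h (fun _ => 1)

theorem ent_submod {Ω α β γ : Type*} [Fintype Ω] [Fintype α] [DecidableEq α]
    [Fintype β] [DecidableEq β] [Fintype γ] [DecidableEq γ]
    {q : Ω → ℝ} (hq : ∀ ω, 0 ≤ q ω) (f : Ω → α) (g : Ω → β) (h : Ω → γ) :
    ent q (fun ω => (f ω, g ω, h ω)) + ent q h ≤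
      ent q (fun ω => (f ω, h ω)) + ent q (fun ω => (g ω, h ω)) := by
  have hl2 : 0 < Real.log 2 := Real.log_pos (by norm_num)
  let P := pmass q (fun ω => (f ω, g ω, h ω))
  let R : α × β × γ → ℝ := fun x =>
    pmass q (fun ω => (f ω, h ω)) (x.1, x.2.2) * pmass q (fun ω => (g ω, h ω)) (x.2.1, x.2.2) /
      pmass q h x.2.2
  have hR : ∀ x, 0 ≤ R x := fun x =>
    div_nonneg (mul_nonneg (pmass_nonneg hq _ _) (pmass_nonneg hq _ _)) (pmass_nonneg hq _ _)
  have hsumR : ∑ x, R x ≤ ∑ ω, q ω := by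
    have e : ∑ x, R x = ∑ c, ∑ a, ∑ b, R (a, b, c) := by
      rw [Fintype.sum_prod_type]
      simp_rw [Fintype.sum_prod_type]
      rw [Finset.sum_congr rfl (fun a _ => Finset.sum_comm), Finset.sum_comm]
    rw [e, ← pmass_total q h]
    refine Finset.sum_le_sum fun c _ => ?_
    have : ∑ a, ∑ b, R (a, b, c) = pmass q h c * pmass q h c / pmass q h c := by
      simp only [R]
      simp_rw [← Finset.sum_div, ← Finset.mul_sum, pmass_marg, ← Finset.sum_mul, pmass_marg]
    rw [this, mul_self_div_self]
  have hsum : ∑ ω, q ω * (R (f ω, g ω, h ω) / P (f ω, g ω, h ω)) ≤ ∑ ω, q ω := by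
    rw [← sum_comp_pmass q (fun ω => (f ω, g ω, h ω)) (fun x => R x / P x)]
    refine le_trans (Finset.sum_le_sum fun x _ => ?_) hsumR
    change P x * (R x / P x) ≤ R x
    by_cases hx : P x = 0
    · simpa [hx] using hR x
    · rw [mul_div_cancel₀ _ hx]
  have key : ∀ ω, q ω * Real.logb 2 (pmass q (fun ω => (f ω, h ω)) (f ω, h ω)) +
      q ω * Real.logb 2 (pmass q (fun ω => (g ω, h ω)) (g ω, h ω)) -
      q ω * Real.logb 2 (pmass q (fun ω => (f ω, g ω, h ω)) (f ω, g ω, h ω)) -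
      q ω * Real.logb 2 (pmass q h (h ω)) ≤
      (q ω * (R (f ω, g ω, h ω) / P (f ω, g ω, h ω)) - q ω) / Real.log 2 := by
    intro ω
    rcases (hq ω).eq_or_lt with h0 | h0
    · simp [← h0]
    · have h1 := h0.trans_le (le_pmass hq (fun ω => (f ω, h ω)) ω)
      have h2 := h0.trans_le (le_pmass hq (fun ω => (g ω, h ω)) ω)
      have h3 := h0.trans_le (le_pmass hq (fun ω => (f ω, g ω, h ω)) ω)
      have h4 := h0.trans_le (le_pmass hq h ω)
      simp only [R, P]
      generalize pmass q (fun ω => (f ω, h ω)) (f ω, h ω) = u1 at *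
      generalize pmass q (fun ω => (g ω, h ω)) (g ω, h ω) = u2 at *
      generalize pmass q (fun ω => (f ω, g ω, h ω)) (f ω, g ω, h ω) = u3 at *
      generalize pmass q h (h ω) = u4 at *
      have hlog := Real.log_le_sub_one_of_pos (x := u1 * u2 / u4 / u3) (by positivity)
      rw [Real.log_div (by positivity) (by positivity), Real.log_div (by positivity)
        (by positivity), Real.log_mul (by positivity) (by positivity)] at hlog
      rw [le_div_iff₀ hl2]
      unfold Real.logb
      have := mul_le_mul_of_nonneg_left hlog h0.le
      have e : (q ω * (Real.log u1 / Real.log 2) + q ω * (Real.log u2 / Real.log 2) -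
        q ω * (Real.log u3 / Real.log 2) - q ω * (Real.log u4 / Real.log 2)) * Real.log 2
        = q ω * (Real.log u1 + Real.log u2 - Real.log u4 - Real.log u3) := by
        field_simp
        ring
      rw [e]
      linarith
  have tot := Finset.sum_le_sum fun ω (_ : ω ∈ Finset.univ) => key ω
  rw [← Finset.sum_div, Finset.sum_sub_distrib, Finset.sum_sub_distrib,
    Finset.sum_sub_distrib, Finset.sum_add_distrib] at tot
  have : (∑ ω, q ω * (R (f ω, g ω, h ω) / P (f ω, g ω, h ω)) - ∑ ω, q ω) / Real.log 2 ≤ 0 :=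
    div_nonpos_of_nonpos_of_nonneg (by linarith) hl2.le
  simp only [ent_eq_sum]
  linarith

theorem ent_family {Ω α γ : Type*} [Fintype Ω] [Fintype α] [DecidableEq α]
    [Fintype γ] [DecidableEq γ] {q : Ω → ℝ} (hq : ∀ ω, 0 ≤ q ω) (W : Ω → γ) {n : ℕ}
    (Z : Fin n → Ω → α) :
    ent q (fun ω => ((fun i => Z i ω), W ω)) - ent q W ≤
      ∑ i, (ent q (fun ω => (Z i ω, W ω)) - ent q W) := by
  induction n with
  | zero =>
    have := ent_mono hq (fun ω => ((fun i => Z i ω), W ω)) W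
      (fun ω ω' h => Prod.ext (funext fun i => i.elim0) h)
    simpa using this
  | succ n ih =>
    have h1 := ih (fun i => Z i.succ)
    have h2 := ent_submod hq (Z 0) (fun ω => (fun i : Fin n => Z i.succ ω)) W
    have h3 := ent_mono hq (fun ω => ((fun i => Z i ω), W ω))
      (fun ω => (Z 0 ω, (fun i : Fin n => Z i.succ ω), W ω)) (fun ω ω' h => by
        simp only [Prod.mk.injEq] at h ⊢
        refine ⟨funext fun i => ?_, h.2.2⟩
        refine Fin.cases h.1 (fun j => congrFun h.2.1 j) i)
    rw [Fin.sum_univ_succ]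
    linarith

theorem ent_unit {Ω : Type*} [Fintype Ω] {q : Ω → ℝ} (hq : ∑ ω, q ω = 1) :
    ent q (fun _ => ()) = 0 := by
  simp [ent, pmass, hq]

theorem ent_pair_le {Ω α β : Type*} [Fintype Ω] [Fintype α] [DecidableEq α]
    [Fintype β] [DecidableEq β] {q : Ω → ℝ} (hq : IsPMF q) (f : Ω → α) (g : Ω → β) :
    ent q (fun ω => (f ω, g ω)) ≤ ent q f + ent q g := by
  have h1 := ent_submod hq.1 f g (fun _ => ())
  have h2 := ent_mono hq.1 (fun ω => (f ω, g ω)) (fun ω => (f ω, g ω, ())) (by simp)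
  have h3 := ent_mono hq.1 (fun ω => (f ω, ())) f (by simp)
  have h4 := ent_mono hq.1 (fun ω => (g ω, ())) g (by simp)
  rw [ent_unit hq.2] at h1
  linarith

theorem ent_family_le {Ω α : Type*} [Fintype Ω] [Fintype α] [DecidableEq α]
    {q : Ω → ℝ} (hq : IsPMF q) {n : ℕ} (Z : Fin n → Ω → α) :
    ent q (fun ω => (fun i => Z i ω)) ≤ ∑ i, ent q (Z i) := by
  have h1 := ent_family hq.1 (fun _ => ()) Z
  have h2 := ent_mono hq.1 (fun ω => (fun i => Z i ω)) (fun ω => ((fun i => Z i ω), ()))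
    (by simp)
  have h3 : ∑ i, (ent q (fun ω => (Z i ω, ())) - ent q (fun _ : Ω => ())) ≤ ∑ i, ent q (Z i) := by
    refine Finset.sum_le_sum fun i _ => ?_
    rw [ent_unit hq.2, sub_zero]
    exact ent_mono hq.1 _ _ (by simp)
  rw [ent_unit hq.2] at h1 h3
  linarith

theorem ent_indep {Ω α : Type*} [Fintype Ω] [Fintype α] [DecidableEq α]
    {q : Ω → ℝ} (hq : ∀ ω, 0 ≤ q ω) {n : ℕ} (X : Fin n → Ω → α)
    (hindep : ∀ xs : Fin n → α,
      pmass q (fun ω => (fun i => X i ω)) xs = ∏ i, pmass q (X i) (xs i)) :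
    ent q (fun ω => (fun i => X i ω)) = ∑ i, ent q (X i) := by
  simp only [ent_eq_sum]
  rw [Finset.sum_neg_distrib, Finset.sum_comm]
  congr 1
  refine Finset.sum_congr rfl fun ω _ => ?_
  rw [← Finset.mul_sum]
  rcases (hq ω).eq_or_lt with h0 | h0
  · simp [← h0]
  · rw [hindep, Real.logb_prod]
    intro i _
    exact ne_of_gt (h0.trans_le (le_pmass hq (X i) ω))

/-- Let `X₁,…,Xₙ` be mutually independent, `Aⁿ` a deterministic function of
`Xⁿ`, suppose `H(Yⁿ|(Aⁿ,Xⁿ)) = ∑ᵢ H(Yᵢ|(Aᵢ,Xᵢ))` (memoryless side-information channel),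
let `T` be any finite-valued random variable, and let `X̂ⁿ` be a deterministic function of
`(T, Yⁿ)`. Then `H(T) ≥ ∑ᵢ [ I(Xᵢ;X̂ᵢ) − I((Xᵢ,Aᵢ);Yᵢ) ]`. -/
theorem converse_chain_encoder_actions {Ω 𝒳 𝒜 𝒴 Xh 𝒯 : Type*} [Fintype Ω]
    [Fintype 𝒳] [DecidableEq 𝒳] [Fintype 𝒜] [DecidableEq 𝒜]
    [Fintype 𝒴] [DecidableEq 𝒴] [Fintype Xh] [DecidableEq Xh] [Fintype 𝒯] [DecidableEq 𝒯]
    (p : Ω → ℝ) (hp : IsPMF p) {n : ℕ}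
    (X : Fin n → Ω → 𝒳) (A : Fin n → Ω → 𝒜) (Y : Fin n → Ω → 𝒴)
    (Xhat : Fin n → Ω → Xh) (T : Ω → 𝒯)
    (hindep : ∀ xs : Fin n → 𝒳,
      pmass p (fun ω => (fun i => X i ω)) xs = ∏ i, pmass p (X i) (xs i))
    (hA : ∃ ψ : (Fin n → 𝒳) → Fin n → 𝒜, ∀ ω i, A i ω = ψ (fun j => X j ω) i)
    (hY : condEnt p (fun ω => (fun i => Y i ω))
        (fun ω => ((fun i => A i ω), (fun i => X i ω))) =
      ∑ i, condEnt p (Y i) (fun ω => (A i ω, X i ω)))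
    (hXhat : ∃ g : 𝒯 → (Fin n → 𝒴) → Fin n → Xh,
      ∀ ω i, Xhat i ω = g (T ω) (fun j => Y j ω) i) :
    ent p T ≥ ∑ i, (mutInf p (X i) (Xhat i) -
      mutInf p (fun ω => (X i ω, A i ω)) (Y i)) := by
  obtain ⟨ψ, hψ⟩ := hA
  obtain ⟨g, hg⟩ := hXhat
  have hq := hp.1
  have hAeq : ∀ ω ω', (fun j => X j ω) = (fun j => X j ω') →
      (fun i => A i ω) = (fun i => A i ω') := by
    intro ω ω' h
    funext i
    rw [hψ, hψ, h]
  have e1 := ent_pair_le hp T (fun ω => (fun i => Y i ω))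
  have e2 := ent_family_le hp Y
  have e3 := ent_indep hq X hindep
  have e4 := ent_family hq (fun ω => (T ω, (fun i => Y i ω))) X
  have e5 := ent_mono hq (fun ω => ((fun i => Y i ω), ((fun i => A i ω), (fun i => X i ω))))
    (fun ω => ((fun i => X i ω), (T ω, (fun i => Y i ω)))) (fun ω ω' h => by
      simp only [Prod.mk.injEq] at h ⊢
      exact ⟨h.2.2, hAeq _ _ h.1, h.1⟩)
  have e6 := ent_mono hq (fun ω => (fun i => X i ω))
    (fun ω => ((fun i => A i ω), (fun i => X i ω))) (fun ω ω' h => congrArg Prod.snd h)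
  have e7 : ∑ i, (ent p (fun ω => (X i ω, (T ω, (fun i => Y i ω)))) -
      ent p (fun ω => (T ω, (fun i => Y i ω)))) ≤
      ∑ i, (ent p (fun ω => (X i ω, Xhat i ω)) - ent p (Xhat i)) := by
    refine Finset.sum_le_sum fun i _ => ?_
    have a1 := ent_submod hq (X i) (fun ω => (T ω, (fun i => Y i ω))) (Xhat i)
    have a2 := ent_mono hq (fun ω => (X i ω, (T ω, (fun i => Y i ω))))
      (fun ω => (X i ω, (T ω, (fun i => Y i ω)), Xhat i ω)) (fun ω ω' h => by
        simp only [Prod.mk.injEq] at h ⊢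
        exact ⟨h.1, h.2.1⟩)
    have a3 := ent_mono hq (fun ω => ((T ω, (fun i => Y i ω)), Xhat i ω))
      (fun ω => (T ω, (fun i => Y i ω))) (fun ω ω' h => by
        refine Prod.ext h ?_
        simp only [Prod.mk.injEq] at h
        change Xhat i ω = Xhat i ω'
        rw [hg, hg, h.1, h.2])
    linarith
  have e8 : ∀ i, ent p (fun ω => (Y i ω, (A i ω, X i ω))) =
      ent p (fun ω => ((X i ω, A i ω), Y i ω)) := fun i =>
    ent_congr hq _ _ (fun ω ω' => by
      simp only [Prod.mk.injEq]
      tauto)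
  have e9 : ∀ i, ent p (fun ω => (A i ω, X i ω)) = ent p (fun ω => (X i ω, A i ω)) := fun i =>
    ent_congr hq _ _ (fun ω ω' => by
      simp only [Prod.mk.injEq]
      tauto)
  simp only [condEnt, e8, e9] at hY
  simp only [mutInf, Finset.sum_sub_distrib, Finset.sum_add_distrib] at *
  linarith
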